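/- Baker–Akhiezer function (Theorem 3). The function Ψ_BA(x, ξ) := (∑_{ν=0}^{k_m} 2^{−ν} U_ν(x, ξ)) · e^{⟨x, ξ⟩}, where ⟨x, ξ⟩ = x₁ξ₁ + x₂ξ₂ is the Euclidean inner product on ℝ², satisfies the eigenfunction equation −Δ_x Ψ_BA(x, ξ) + V_k(x)·Ψ_BA(x, ξ) = −|ξ|²·Ψ_BA(x, ξ) at all points x = (r cos φ, r sin φ), ξ = (ρ cos ϕ, ρ sin ϕ) with r > 0, ρ > 0, W(φ) ≠ 0 and W(ϕ) ≠ 0, where Δ_x is the Laplacian in the variable x. -/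

import Mathlib

/-- The Wronskian of a family of `n` real functions: the determinant of the
`n × n` matrix whose `(i, j)`-entry is the `j`-th derivative of the `i`-th function. -/
noncomputable def wronsk {n : ℕ} (f : Fin n → ℝ → ℝ) (t : ℝ) : ℝ :=
  (Matrix.of fun i j : Fin n => iteratedDeriv (j : ℕ) (f i) t).det

/-- The functions `χ_i(φ) = cos(k_i φ + θ_i)`. -/
noncomputable def chiF (m : ℕ) (k : Fin (m + 1) → ℤ) (θ : Fin (m + 1) → ℝ)
    (i : Fin (m + 1)) : ℝ → ℝ :=
  fun φ => Real.cos ((k i : ℝ) * φ + θ i)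

/-- `W(φ) = Wr[χ_0, …, χ_m](φ)`. -/
noncomputable def Wfn (m : ℕ) (k : Fin (m + 1) → ℤ) (θ : Fin (m + 1) → ℝ) : ℝ → ℝ :=
  wronsk (chiF m k θ)

/-- `Ψ_i(φ) = Wr[χ_0, …, χ_{i-1}, χ_{i+1}, …, χ_m](φ) / W(φ)`. -/
noncomputable def PsiF (m : ℕ) (k : Fin (m + 1) → ℤ) (θ : Fin (m + 1) → ℝ)
    (i : Fin (m + 1)) : ℝ → ℝ :=
  fun φ => wronsk (fun j : Fin m => chiF m k θ (i.succAbove j)) φ / Wfn m k θ φ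

/-- `c_i = ∏_{j ≠ i} (k_i² − k_j²)`. -/
noncomputable def cF (m : ℕ) (k : Fin (m + 1) → ℤ) (i : Fin (m + 1)) : ℝ :=
  ∏ j ∈ Finset.univ.erase i, ((k i : ℝ) ^ 2 - (k j : ℝ) ^ 2)

/-- The Hadamard coefficients `U_ν` in polar coordinates:
`U_ν = ((−2)^ν/(rρ)^ν) ∑_i c_i Ψ_i(φ) Ψ_i(ϕ) T_{k_i}^{(ν)}(cos(φ − ϕ))`. -/
noncomputable def Ucoef (m : ℕ) (k : Fin (m + 1) → ℤ) (θ : Fin (m + 1) → ℝ)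
    (ν : ℕ) (r φ ρ ϕ : ℝ) : ℝ :=
  ((-2 : ℝ) ^ ν / (r * ρ) ^ ν) *
    ∑ i, cF m k i * PsiF m k θ i φ * PsiF m k θ i ϕ *
      (Polynomial.derivative^[ν] (Polynomial.Chebyshev.T ℝ (k i))).eval (Real.cos (φ - ϕ))

/-- The potential `V_k` in polar coordinates: `V_k = −(2/r²)·(d²/dφ²) log W(φ)`. -/
noncomputable def Vpot (m : ℕ) (k : Fin (m + 1) → ℤ) (θ : Fin (m + 1) → ℝ)
    (r φ : ℝ) : ℝ :=
  -(2 / r ^ 2) * deriv (deriv fun t => Real.log (Wfn m k θ t)) φ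

/-- First partial derivative in the first variable. -/
noncomputable def pdx (f : ℝ × ℝ → ℝ) (x : ℝ × ℝ) : ℝ := deriv (fun s => f (s, x.2)) x.1

/-- First partial derivative in the second variable. -/
noncomputable def pdy (f : ℝ × ℝ → ℝ) (x : ℝ × ℝ) : ℝ := deriv (fun s => f (x.1, s)) x.2

/-- The Laplacian on `ℝ²`. -/
noncomputable def lap2 (f : ℝ × ℝ → ℝ) (x : ℝ × ℝ) : ℝ := pdx (pdx f) x + pdy (pdy f) x


/-- Local polar coordinates around the angle `φ`. -/
theorem polarR_x {x y : ℝ} (h : 0 < x ^ 2 + y ^ 2) :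
    HasDerivAt (fun s => Real.sqrt (s ^ 2 + y ^ 2)) (x / Real.sqrt (x ^ 2 + y ^ 2)) x := by
  have h1 : HasDerivAt (fun s : ℝ => s ^ 2 + y ^ 2) (2 * x) x := by
    simpa using (hasDerivAt_pow 2 x).add_const (y ^ 2)
  convert! h1.sqrt h.ne' using 1
  field_simp

theorem polarR_y {x y : ℝ} (h : 0 < x ^ 2 + y ^ 2) :
    HasDerivAt (fun s => Real.sqrt (x ^ 2 + s ^ 2)) (y / Real.sqrt (x ^ 2 + y ^ 2)) y := by
  have h1 : HasDerivAt (fun s : ℝ => x ^ 2 + s ^ 2) (2 * y) y := by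
    simpa using (hasDerivAt_pow 2 y).const_add (x ^ 2)
  convert! h1.sqrt h.ne' using 1
  field_simp

noncomputable def polarA (φ x y : ℝ) : ℝ :=
  φ + Real.arctan ((y * Real.cos φ - x * Real.sin φ) / (x * Real.cos φ + y * Real.sin φ))

theorem polar_sq (φ x y : ℝ) : (x * Real.cos φ + y * Real.sin φ) ^ 2 +
    (y * Real.cos φ - x * Real.sin φ) ^ 2 = x ^ 2 + y ^ 2 := by
  linear_combination (x ^ 2 + y ^ 2) * Real.cos_sq_add_sin_sq φ

theorem polar_pos {φ x y : ℝ} (h : 0 < x * Real.cos φ + y * Real.sin φ) : 0 < x ^ 2 + y ^ 2 := by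
  rw [← polar_sq φ]; positivity

theorem polarA_x {φ x y : ℝ} (h : 0 < x * Real.cos φ + y * Real.sin φ) :
    HasDerivAt (fun s => polarA φ s y) (-y / (x ^ 2 + y ^ 2)) x := by
  have hn : HasDerivAt (fun s => y * Real.cos φ - s * Real.sin φ) (-Real.sin φ) x := by
    simpa using ((hasDerivAt_id x).mul_const (Real.sin φ)).const_sub (y * Real.cos φ)
  have hd : HasDerivAt (fun s => s * Real.cos φ + y * Real.sin φ) (Real.cos φ) x := by
    simpa using ((hasDerivAt_id x).mul_const (Real.cos φ)).add_const (y * Real.sin φ)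
  have := ((hn.div hd h.ne').arctan).const_add φ
  refine this.congr_deriv ?_
  have h2 := polar_sq φ x y
  have h3 := polar_pos h
  have e : -Real.sin φ * (x * Real.cos φ + y * Real.sin φ) -
      (y * Real.cos φ - x * Real.sin φ) * Real.cos φ = -y := by
    linear_combination (-y) * Real.cos_sq_add_sin_sq φ
  simp only [Pi.div_apply]
  rw [e, ← h2]
  have h4 := h.ne'
  generalize x * Real.cos φ + y * Real.sin φ = a at *
  generalize y * Real.cos φ - x * Real.sin φ = b at *
  have h5 : a ^ 2 + b ^ 2 ≠ 0 := by positivity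
  field_simp

theorem polarA_y {φ x y : ℝ} (h : 0 < x * Real.cos φ + y * Real.sin φ) :
    HasDerivAt (fun s => polarA φ x s) (x / (x ^ 2 + y ^ 2)) y := by
  have hn : HasDerivAt (fun s => s * Real.cos φ - x * Real.sin φ) (Real.cos φ) y := by
    simpa using ((hasDerivAt_id y).mul_const (Real.cos φ)).sub_const (x * Real.sin φ)
  have hd : HasDerivAt (fun s => x * Real.cos φ + s * Real.sin φ) (Real.sin φ) y := by
    simpa using ((hasDerivAt_id y).mul_const (Real.sin φ)).const_add (x * Real.cos φ)
  have := ((hn.div hd h.ne').arctan).const_add φ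
  refine this.congr_deriv ?_
  have h2 := polar_sq φ x y
  have h3 := polar_pos h
  have e : Real.cos φ * (x * Real.cos φ + y * Real.sin φ) -
      (y * Real.cos φ - x * Real.sin φ) * Real.sin φ = x := by
    linear_combination x * Real.cos_sq_add_sin_sq φ
  simp only [Pi.div_apply]
  rw [e, ← h2]
  have h4 := h.ne'
  generalize x * Real.cos φ + y * Real.sin φ = a at *
  generalize y * Real.cos φ - x * Real.sin φ = b at *
  have h5 : a ^ 2 + b ^ 2 ≠ 0 := by positivity
  field_simp

theorem polar_inv {φ x y : ℝ} (h : 0 < x * Real.cos φ + y * Real.sin φ) :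
    Real.sqrt (x ^ 2 + y ^ 2) * Real.cos (polarA φ x y) = x ∧
    Real.sqrt (x ^ 2 + y ^ 2) * Real.sin (polarA φ x y) = y := by
  have h2 := polar_sq φ x y
  set a := x * Real.cos φ + y * Real.sin φ with ha
  set b := y * Real.cos φ - x * Real.sin φ with hb
  have h5 : Real.sqrt (1 + (b / a) ^ 2) = Real.sqrt (x ^ 2 + y ^ 2) / a := by
    rw [← h2, show 1 + (b / a) ^ 2 = (a ^ 2 + b ^ 2) / a ^ 2 by field_simp,
      Real.sqrt_div (by positivity), Real.sqrt_sq h.le]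
  have h6 : Real.sqrt (x ^ 2 + y ^ 2) ≠ 0 := by
    rw [← h2]; positivity
  unfold polarA
  rw [Real.cos_add, Real.sin_add, Real.cos_arctan, Real.sin_arctan, ← ha, ← hb, h5]
  have h4 := h.ne'
  constructor
  · field_simp
    rw [ha, hb]; linear_combination x * Real.cos_sq_add_sin_sq φ
  · field_simp
    rw [ha, hb]; linear_combination y * Real.cos_sq_add_sin_sq φ

theorem polar_base {r φ : ℝ} (hr : 0 < r) :
    (0 < (r * Real.cos φ) * Real.cos φ + (r * Real.sin φ) * Real.sin φ) ∧
    Real.sqrt ((r * Real.cos φ) ^ 2 + (r * Real.sin φ) ^ 2) = r ∧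
    polarA φ (r * Real.cos φ) (r * Real.sin φ) = φ := by
  refine ⟨?_, ?_, ?_⟩
  · have : (r * Real.cos φ) * Real.cos φ + (r * Real.sin φ) * Real.sin φ = r := by
      linear_combination r * Real.cos_sq_add_sin_sq φ
    rwa [this]
  · have : (r * Real.cos φ) ^ 2 + (r * Real.sin φ) ^ 2 = r ^ 2 := by
      linear_combination r ^ 2 * Real.cos_sq_add_sin_sq φ
    rw [this, Real.sqrt_sq hr.le]
  · unfold polarA
    have : r * Real.sin φ * Real.cos φ - r * Real.cos φ * Real.sin φ = 0 := by ring
    rw [this]; simp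

open Filter Topology in
theorem lap_polar (G f : ℝ × ℝ → ℝ) (r φ : ℝ) (hr : 0 < r) (hG : ContDiffAt ℝ 2 G (r, φ))
    (hf : ∀ᶠ p in 𝓝 (r, φ), f (p.1 * Real.cos p.2, p.1 * Real.sin p.2) = G p) :
    lap2 f (r * Real.cos φ, r * Real.sin φ) =
      deriv (deriv fun s => G (s, φ)) r + deriv (fun s => G (s, φ)) r / r +
        deriv (deriv fun s => G (r, s)) φ / r ^ 2 := by
  obtain ⟨hb1, hb2, hb3⟩ := polar_base (φ := φ) hr
  set x0 := r * Real.cos φ with hx0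
  set y0 := r * Real.sin φ with hy0
  let P : ℝ × ℝ → ℝ × ℝ := fun q => (Real.sqrt (q.1 ^ 2 + q.2 ^ 2), polarA φ q.1 q.2)
  have hP0 : P (x0, y0) = (r, φ) := by simp only [P]; rw [hb2, hb3]
  have hPc : ContinuousAt P (x0, y0) := by
    refine ContinuousAt.prodMk (by fun_prop) ?_
    unfold polarA
    refine continuousAt_const.add (Real.continuous_arctan.continuousAt.comp ?_)
    exact ContinuousAt.div (by fun_prop) (by fun_prop) hb1.ne'
  have hPt : Tendsto P (𝓝 (x0, y0)) (𝓝 (r, φ)) := hP0 ▸ hPc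
  have hpos : ∀ᶠ q in 𝓝 ((x0, y0) : ℝ × ℝ), 0 < q.1 * Real.cos φ + q.2 * Real.sin φ := by
    have : ContinuousAt (fun q : ℝ × ℝ => q.1 * Real.cos φ + q.2 * Real.sin φ) (x0, y0) := by
      fun_prop
    exact this.eventually (lt_mem_nhds hb1)
  -- derivatives of G
  have hGd : ∀ᶠ p in 𝓝 (r, φ), DifferentiableAt ℝ G p := by
    have := hG.eventually (by simp)
    filter_upwards [this] with p hp
    exact hp.differentiableAt (by norm_num)
  have hG' : DifferentiableAt ℝ (fderiv ℝ G) (r, φ) :=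
    (hG.fderiv_right (m := 1) (by norm_num)).differentiableAt (by norm_num)
  let Gr : ℝ × ℝ → ℝ := fun p => fderiv ℝ G p (1, 0)
  let Gt : ℝ × ℝ → ℝ := fun p => fderiv ℝ G p (0, 1)
  have hGr : HasFDerivAt Gr (fderiv ℝ Gr (r, φ)) (r, φ) :=
    (hG'.clm_apply (differentiableAt_const _)).hasFDerivAt
  have hGt : HasFDerivAt Gt (fderiv ℝ Gt (r, φ)) (r, φ) :=
    (hG'.clm_apply (differentiableAt_const _)).hasFDerivAt
  have lin : ∀ (L : ℝ × ℝ →L[ℝ] ℝ) (a b : ℝ), L (a, b) = a * L (1, 0) + b * L (0, 1) := by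
    intro L a b
    have : ((a, b) : ℝ × ℝ) = a • (1, 0) + b • (0, 1) := by simp
    rw [this, map_add, map_smul, map_smul]; simp
  set Grr := fderiv ℝ Gr (r, φ) (1, 0) with hGrr
  set Grt := fderiv ℝ Gr (r, φ) (0, 1) with hGrt
  set Gtr := fderiv ℝ Gt (r, φ) (1, 0) with hGtr
  set Gtt := fderiv ℝ Gt (r, φ) (0, 1) with hGtt
  -- right-hand side
  have hline1 : Tendsto (fun s : ℝ => (s, φ)) (𝓝 r) (𝓝 (r, φ)) :=
    (Continuous.prodMk_left φ).continuousAt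
  have hline2 : Tendsto (fun s : ℝ => (r, s)) (𝓝 φ) (𝓝 (r, φ)) :=
    (Continuous.prodMk_right r).continuousAt
  have e1 : (deriv fun s => G (s, φ)) =ᶠ[𝓝 r] fun s => Gr (s, φ) := by
    filter_upwards [hline1.eventually hGd] with s hs
    exact (hs.hasFDerivAt.comp_hasDerivAt s
      ((hasDerivAt_id s).prodMk (hasDerivAt_const s φ))).deriv
  have e2 : (deriv fun s => G (r, s)) =ᶠ[𝓝 φ] fun s => Gt (r, s) := by
    filter_upwards [hline2.eventually hGd] with s hs
    exact (hs.hasFDerivAt.comp_hasDerivAt s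
      ((hasDerivAt_const s r).prodMk (hasDerivAt_id s))).deriv
  have e3 : deriv (deriv fun s => G (s, φ)) r = Grr := by
    rw [e1.deriv_eq]
    exact (hGr.comp_hasDerivAt r ((hasDerivAt_id r).prodMk (hasDerivAt_const r φ))).deriv
  have e4 : deriv (deriv fun s => G (r, s)) φ = Gtt := by
    rw [e2.deriv_eq]
    exact (hGt.comp_hasDerivAt φ ((hasDerivAt_const φ r).prodMk (hasDerivAt_id φ))).deriv
  rw [e3, e4, e1.eq_of_nhds]
  -- left-hand side
  have hfP : ∀ᶠ q in 𝓝 ((x0, y0) : ℝ × ℝ), f q = G (P q) := by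
    filter_upwards [hpos, hPt.eventually hf] with q hq hq2
    rw [← hq2]
    simp only [P]
    rw [(polar_inv hq).1, (polar_inv hq).2]
  have hx : ∀ᶠ q in 𝓝 ((x0, y0) : ℝ × ℝ), pdx f q =
      Gr (P q) * (q.1 / Real.sqrt (q.1 ^ 2 + q.2 ^ 2)) +
      Gt (P q) * (-q.2 / (q.1 ^ 2 + q.2 ^ 2)) := by
    filter_upwards [hpos, eventually_eventually_nhds.2 hfP, hPt.eventually hGd] with q hq hq2 hq3
    have hl : Tendsto (fun s : ℝ => (s, q.2)) (𝓝 q.1) (𝓝 q) :=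
      (Continuous.prodMk_left q.2).continuousAt
    have e : (fun s => f (s, q.2)) =ᶠ[𝓝 q.1] fun s => G (P (s, q.2)) := hl.eventually hq2
    unfold pdx
    rw [e.deriv_eq]
    have := hq3.hasFDerivAt.comp_hasDerivAt_of_eq q.1
      ((polarR_x (polar_pos hq)).prodMk (polarA_x hq)) rfl
    rw [lin] at this
    refine this.deriv.trans ?_
    simp only [Gr, Gt]; ring
  have hy : ∀ᶠ q in 𝓝 ((x0, y0) : ℝ × ℝ), pdy f q =
      Gr (P q) * (q.2 / Real.sqrt (q.1 ^ 2 + q.2 ^ 2)) +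
      Gt (P q) * (q.1 / (q.1 ^ 2 + q.2 ^ 2)) := by
    filter_upwards [hpos, eventually_eventually_nhds.2 hfP, hPt.eventually hGd] with q hq hq2 hq3
    have hl : Tendsto (fun s : ℝ => (q.1, s)) (𝓝 q.2) (𝓝 q) :=
      (Continuous.prodMk_right q.1).continuousAt
    have e : (fun s => f (q.1, s)) =ᶠ[𝓝 q.2] fun s => G (P (q.1, s)) := hl.eventually hq2
    unfold pdy
    rw [e.deriv_eq]
    have := hq3.hasFDerivAt.comp_hasDerivAt_of_eq q.2
      ((polarR_y (polar_pos hq)).prodMk (polarA_y hq)) rfl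
    rw [lin] at this
    refine this.deriv.trans ?_
    simp only [Gr, Gt]; ring
  have hsq : x0 ^ 2 + y0 ^ 2 = r ^ 2 := by
    rw [hx0, hy0]; linear_combination r ^ 2 * Real.cos_sq_add_sin_sq φ
  have hp0 := polar_pos hb1
  have hRx := polarR_x hp0
  have hRy := polarR_y hp0
  have hAx := polarA_x hb1
  have hAy := polarA_y hb1
  rw [hb2] at hRx hRy
  rw [hsq] at hAx hAy
  have hcomp_x : ∀ (g : ℝ × ℝ → ℝ) (g' : ℝ × ℝ →L[ℝ] ℝ), HasFDerivAt g g' (r, φ) →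
      HasDerivAt (fun s => g (P (s, y0))) (x0 / r * g' (1, 0) + -y0 / r ^ 2 * g' (0, 1)) x0 := by
    intro g g' hg
    rw [← lin]
    exact hg.comp_hasDerivAt_of_eq x0 (hRx.prodMk hAx) hP0.symm
  have hcomp_y : ∀ (g : ℝ × ℝ → ℝ) (g' : ℝ × ℝ →L[ℝ] ℝ), HasFDerivAt g g' (r, φ) →
      HasDerivAt (fun s => g (P (x0, s))) (y0 / r * g' (1, 0) + x0 / r ^ 2 * g' (0, 1)) y0 := by
    intro g g' hg
    rw [← lin]
    exact hg.comp_hasDerivAt_of_eq y0 (hRy.prodMk hAy) hP0.symm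
  have hr0 := hr.ne'
  have hxx : pdx (pdx f) (x0, y0) =
      (x0 / r * Grr + -y0 / r ^ 2 * Grt) * (x0 / r) + Gr (r, φ) * ((r - x0 * (x0 / r)) / r ^ 2) +
      ((x0 / r * Gtr + -y0 / r ^ 2 * Gtt) * (-y0 / r ^ 2) +
        Gt (r, φ) * (2 * x0 * y0 / r ^ 4)) := by
    have hl : Tendsto (fun s : ℝ => (s, y0)) (𝓝 x0) (𝓝 (x0, y0)) :=
      (Continuous.prodMk_left y0).continuousAt
    have e := hl.eventually hx
    have e' : (fun s => pdx f (s, y0)) =ᶠ[𝓝 x0] _ := e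
    change deriv (fun s => pdx f (s, y0)) x0 = _
    rw [e'.deriv_eq]
    have d1 := (hcomp_x Gr _ hGr).mul ((hasDerivAt_id x0).div hRx (by rw [hb2]; exact hr0))
    have dq : HasDerivAt (fun s : ℝ => s ^ 2 + y0 ^ 2) (2 * x0) x0 := by
      simpa using (hasDerivAt_pow 2 x0).add_const (y0 ^ 2)
    have d2 := (hcomp_x Gt _ hGt).mul ((hasDerivAt_const x0 (-y0)).div dq hp0.ne')
    refine (d1.add d2).deriv.trans ?_
    simp only [Pi.div_apply, hP0, hsq, Real.sqrt_sq hr.le, id]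
    simp only [← hGrr, ← hGrt, ← hGtr, ← hGtt]
    field_simp
    ring
  have hyy : pdy (pdy f) (x0, y0) =
      (y0 / r * Grr + x0 / r ^ 2 * Grt) * (y0 / r) + Gr (r, φ) * ((r - y0 * (y0 / r)) / r ^ 2) +
      ((y0 / r * Gtr + x0 / r ^ 2 * Gtt) * (x0 / r ^ 2) +
        Gt (r, φ) * (-2 * x0 * y0 / r ^ 4)) := by
    have hl : Tendsto (fun s : ℝ => (x0, s)) (𝓝 y0) (𝓝 (x0, y0)) :=
      (Continuous.prodMk_right x0).continuousAt
    have e := hl.eventually hy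
    have e' : (fun s => pdy f (x0, s)) =ᶠ[𝓝 y0] _ := e
    change deriv (fun s => pdy f (x0, s)) y0 = _
    rw [e'.deriv_eq]
    have d1 := (hcomp_y Gr _ hGr).mul ((hasDerivAt_id y0).div hRy (by rw [hb2]; exact hr0))
    have dq : HasDerivAt (fun s : ℝ => x0 ^ 2 + s ^ 2) (2 * y0) y0 := by
      simpa using (hasDerivAt_pow 2 y0).const_add (x0 ^ 2)
    have d2 := (hcomp_y Gt _ hGt).mul ((hasDerivAt_const y0 x0).div dq hp0.ne')
    refine (d1.add d2).deriv.trans ?_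
    simp only [Pi.div_apply, hP0, hsq, Real.sqrt_sq hr.le, id]
    simp only [← hGrr, ← hGrt, ← hGtr, ← hGtt]
    field_simp
    ring
  unfold lap2
  rw [hxx, hyy]
  have hy2 : y0 ^ 2 = r ^ 2 - x0 ^ 2 := by linarith
  field_simp
  ring_nf
  simp only [hy2]
  ring

/-! ### Wronskian facts -/

/-- The `j`-th derivative of `χ_i`. -/
noncomputable def chiD (m : ℕ) (k : Fin (m + 1) → ℤ) (θ : Fin (m + 1) → ℝ) (j : ℕ)
    (i : Fin (m + 1)) (t : ℝ) : ℝ := iteratedDeriv j (chiF m k θ i) t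

theorem chiF_contDiff (m : ℕ) (k : Fin (m + 1) → ℤ) (θ : Fin (m + 1) → ℝ) (i : Fin (m + 1))
    (n : WithTop ℕ∞) : ContDiff ℝ n (chiF m k θ i) := by
  unfold chiF; fun_prop

theorem chiD_contDiff (m : ℕ) (k : Fin (m + 1) → ℤ) (θ : Fin (m + 1) → ℝ) (j : ℕ)
    (i : Fin (m + 1)) : ContDiff ℝ 3 (chiD m k θ j i) := by
  have h := chiF_contDiff m k θ i ((3 + j : ℕ) : WithTop ℕ∞)
  exact ContDiff.iterate_deriv' 3 j h |> fun h => by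
    rw [← iteratedDeriv_eq_iterate] at h; exact h

theorem chiD_hasDerivAt (m : ℕ) (k : Fin (m + 1) → ℤ) (θ : Fin (m + 1) → ℝ) (j : ℕ)
    (i : Fin (m + 1)) (t : ℝ) : HasDerivAt (chiD m k θ j i) (chiD m k θ (j + 1) i t) t := by
  have h := ((chiD_contDiff m k θ j i).differentiable (by norm_num) t).hasDerivAt
  unfold chiD at *
  rw [iteratedDeriv_succ]
  exact h

theorem chiD_zero (m : ℕ) (k : Fin (m + 1) → ℤ) (θ : Fin (m + 1) → ℝ) (i : Fin (m + 1)) (t : ℝ) :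
    chiD m k θ 0 i t = Real.cos (k i * t + θ i) := by
  simp [chiD, chiF]

theorem chiD_one (m : ℕ) (k : Fin (m + 1) → ℤ) (θ : Fin (m + 1) → ℝ) (i : Fin (m + 1)) (t : ℝ) :
    chiD m k θ 1 i t = -(k i * Real.sin (k i * t + θ i)) := by
  have h := chiD_hasDerivAt m k θ 0 i t
  have e : chiD m k θ 0 i = fun t => Real.cos (k i * t + θ i) := funext (chiD_zero m k θ i)
  rw [e] at h
  have h2 : HasDerivAt (fun t : ℝ => (k i : ℝ) * t + θ i) (k i) t := by
    simpa using ((hasDerivAt_id t).const_mul (k i : ℝ)).add_const (θ i)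
  have := h.unique h2.cos
  simp only [zero_add] at this
  rw [this]; ring

theorem chiD_add_two (m : ℕ) (k : Fin (m + 1) → ℤ) (θ : Fin (m + 1) → ℝ) (j : ℕ)
    (i : Fin (m + 1)) (t : ℝ) : chiD m k θ (j + 2) i t = -(k i : ℝ) ^ 2 * chiD m k θ j i t := by
  induction j generalizing t with
  | zero =>
    have h := chiD_hasDerivAt m k θ 1 i t
    have e : chiD m k θ 1 i = fun t => -(k i * Real.sin (k i * t + θ i)) :=
      funext (chiD_one m k θ i)
    rw [e] at h
    have h2 : HasDerivAt (fun t : ℝ => (k i : ℝ) * t + θ i) (k i) t := by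
      simpa using ((hasDerivAt_id t).const_mul (k i : ℝ)).add_const (θ i)
    have := h.unique ((h2.sin.const_mul (k i : ℝ)).neg)
    simp only [Nat.reduceAdd] at this
    rw [zero_add, this, chiD_zero]; ring
  | succ j ih =>
    have h := chiD_hasDerivAt m k θ (j + 2) i t
    have e : chiD m k θ (j + 2) i = fun t => -(k i : ℝ) ^ 2 * chiD m k θ j i t := funext ih
    rw [e] at h
    exact h.unique ((chiD_hasDerivAt m k θ j i t).const_mul _)

theorem chiD_even (m : ℕ) (k : Fin (m + 1) → ℤ) (θ : Fin (m + 1) → ℝ) (l : ℕ)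
    (i : Fin (m + 1)) (t : ℝ) : chiD m k θ (2 * l) i t =
      (-1) ^ l * (((k i : ℝ) ^ 2) ^ l * Real.cos (k i * t + θ i)) := by
  induction l with
  | zero => simp [chiD_zero]
  | succ l ih =>
    rw [show 2 * (l + 1) = 2 * l + 2 by ring, chiD_add_two, ih]; ring

theorem chiD_odd (m : ℕ) (k : Fin (m + 1) → ℤ) (θ : Fin (m + 1) → ℝ) (l : ℕ)
    (i : Fin (m + 1)) (t : ℝ) : chiD m k θ (2 * l + 1) i t =
      (-1) ^ (l + 1) * (((k i : ℝ) ^ 2) ^ l * (k i * Real.sin (k i * t + θ i))) := by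
  induction l with
  | zero => simp [chiD_one]
  | succ l ih =>
    rw [show 2 * (l + 1) + 1 = 2 * l + 1 + 2 by ring, chiD_add_two, ih]; ring

/-- The Wronskian matrix. -/
noncomputable def wM (m : ℕ) (k : Fin (m + 1) → ℤ) (θ : Fin (m + 1) → ℝ) (t : ℝ) :
    Matrix (Fin (m + 1)) (Fin (m + 1)) ℝ := Matrix.of fun i j => chiD m k θ j i t

theorem wM_det (m : ℕ) (k : Fin (m + 1) → ℤ) (θ : Fin (m + 1) → ℝ) (t : ℝ) :
    (wM m k θ t).det = Wfn m k θ t := rfl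

theorem wronsk_contDiff {n m : ℕ} (k : Fin (m + 1) → ℤ) (θ : Fin (m + 1) → ℝ)
    (e : Fin n → Fin (m + 1)) : ContDiff ℝ 3 (wronsk fun j => chiF m k θ (e j)) := by
  have : (wronsk fun j => chiF m k θ (e j)) = fun t =>
      ∑ σ : Equiv.Perm (Fin n), ((Equiv.Perm.sign σ : ℤ) : ℝ) *
        ∏ i : Fin n, chiD m k θ (i : ℕ) (e (σ i)) t := by
    funext t
    unfold wronsk
    rw [Matrix.det_apply']
    rfl
  rw [this]
  refine ContDiff.sum fun σ _ => contDiff_const.mul (contDiff_prod fun i _ => ?_)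
  exact chiD_contDiff m k θ _ _

theorem Wfn_contDiff (m : ℕ) (k : Fin (m + 1) → ℤ) (θ : Fin (m + 1) → ℝ) :
    ContDiff ℝ 3 (Wfn m k θ) := wronsk_contDiff k θ id

theorem PsiF_contDiffAt (m : ℕ) (k : Fin (m + 1) → ℤ) (θ : Fin (m + 1) → ℝ) (i : Fin (m + 1))
    (t : ℝ) (ht : Wfn m k θ t ≠ 0) : ContDiffAt ℝ 3 (PsiF m k θ i) t :=
  (wronsk_contDiff k θ i.succAbove).contDiffAt.div (Wfn_contDiff m k θ).contDiffAt ht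

/-- The signed version of `Ψ_i`. -/
noncomputable def psi (m : ℕ) (k : Fin (m + 1) → ℤ) (θ : Fin (m + 1) → ℝ) (i : Fin (m + 1))
    (t : ℝ) : ℝ := (-1) ^ ((i : ℕ) + m) * PsiF m k θ i t

theorem psi_adj (m : ℕ) (k : Fin (m + 1) → ℤ) (θ : Fin (m + 1) → ℝ) (i : Fin (m + 1)) (t : ℝ)
    (ht : Wfn m k θ t ≠ 0) :
    (wM m k θ t).adjugate (Fin.last m) i = Wfn m k θ t * psi m k θ i t := by
  rw [Matrix.adjugate_fin_succ_eq_det_submatrix]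
  unfold psi PsiF
  have : ((wM m k θ t).submatrix i.succAbove (Fin.last m).succAbove).det =
      wronsk (fun j => chiF m k θ (i.succAbove j)) t := by
    unfold wronsk
    congr 1
    ext a b
    simp [wM, chiD]
  rw [this]
  simp only [Fin.val_last]
  field_simp

theorem psi_system (m : ℕ) (k : Fin (m + 1) → ℤ) (θ : Fin (m + 1) → ℝ) (t : ℝ)
    (ht : Wfn m k θ t ≠ 0) (j : ℕ) (hj : j ≤ m) :
    ∑ i, psi m k θ i t * chiD m k θ j i t = if j = m then 1 else 0 := by
  have h := congrFun (congrFun (Matrix.adjugate_mul (wM m k θ t)) (Fin.last m))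
    ⟨j, Nat.lt_succ_of_le hj⟩
  rw [Matrix.mul_apply, wM_det] at h
  simp only [psi_adj m k θ _ t ht, mul_assoc, ← Finset.mul_sum] at h
  rw [Matrix.smul_apply, smul_eq_mul, mul_right_inj' ht, Matrix.one_apply] at h
  refine h.trans ?_
  simp only [Fin.ext_iff, Fin.val_last, eq_comm]

theorem system_unique (m : ℕ) (k : Fin (m + 1) → ℤ) (θ : Fin (m + 1) → ℝ) (t : ℝ)
    (ht : Wfn m k θ t ≠ 0) (v : Fin (m + 1) → ℝ)
    (h : ∀ j : ℕ, j ≤ m → ∑ i, v i * chiD m k θ j i t = 0) : v = 0 := by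
  apply Matrix.eq_zero_of_vecMul_eq_zero (M := wM m k θ t) (by rwa [wM_det])
  funext j
  exact h j (Nat.le_of_lt_succ j.2)

theorem Wfn_hasDerivAt (m : ℕ) (k : Fin (m + 1) → ℤ) (θ : Fin (m + 1) → ℝ) (t : ℝ)
    (ht : Wfn m k θ t ≠ 0) :
    HasDerivAt (Wfn m k θ) (Wfn m k θ t * ∑ i, psi m k θ i t * chiD m k θ (m + 1) i t) t := by
  have hW : Wfn m k θ = fun t =>
      ∑ σ : Equiv.Perm (Fin (m + 1)), ((Equiv.Perm.sign σ : ℤ) : ℝ) *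
        ∏ i : Fin (m + 1), chiD m k θ (i : ℕ) (σ i) t := by
    funext t
    unfold Wfn wronsk
    rw [Matrix.det_apply']
    rfl
  have h1 : HasDerivAt (Wfn m k θ) (∑ σ : Equiv.Perm (Fin (m + 1)),
      ((Equiv.Perm.sign σ : ℤ) : ℝ) * ∑ i : Fin (m + 1), (∏ j ∈ Finset.univ.erase i,
        chiD m k θ (j : ℕ) (σ j) t) • chiD m k θ ((i : ℕ) + 1) (σ i) t) t := by
    rw [hW]
    refine HasDerivAt.fun_sum fun σ _ => HasDerivAt.const_mul _ ?_
    exact HasDerivAt.fun_finsetProd fun i _ => chiD_hasDerivAt m k θ _ _ t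
  refine h1.congr_deriv ?_
  have h2 : ∀ i : Fin (m + 1), ∑ σ : Equiv.Perm (Fin (m + 1)),
      ((Equiv.Perm.sign σ : ℤ) : ℝ) * ((∏ j ∈ Finset.univ.erase i,
        chiD m k θ (j : ℕ) (σ j) t) • chiD m k θ ((i : ℕ) + 1) (σ i) t) =
      ((wM m k θ t).updateCol i fun a => chiD m k θ ((i : ℕ) + 1) a t).det := by
    intro i
    rw [Matrix.det_apply']
    refine Finset.sum_congr rfl fun σ _ => ?_
    congr 1
    rw [← Finset.prod_erase_mul _ _ (Finset.mem_univ i), smul_eq_mul]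
    congr 1
    · refine Finset.prod_congr rfl fun j hj => ?_
      rw [Matrix.updateCol_ne (Finset.ne_of_mem_erase hj)]; rfl
    · rw [Matrix.updateCol_self]
  simp only [Finset.mul_sum]
  rw [Finset.sum_comm]
  simp only [h2]
  rw [Finset.sum_eq_single (Fin.last m)]
  · rw [← Matrix.cramer_apply, Matrix.cramer_eq_adjugate_mulVec, Matrix.mulVec, dotProduct]
    refine Finset.sum_congr rfl fun i _ => ?_
    rw [psi_adj m k θ _ t ht, Fin.val_last]; ring
  · intro i _ hi
    have hlt : (i : ℕ) < m := Fin.val_lt_last hi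
    refine Matrix.det_zero_of_column_eq (i := i) (j := ⟨i + 1, by omega⟩) ?_ ?_
    · intro h; have := congrArg Fin.val h; simp at this
    · intro a
      rw [Matrix.updateCol_self, Matrix.updateCol_ne]
      · rfl
      · intro h; have := congrArg Fin.val h; simp at this
  · simp

theorem psi_contDiffAt (m : ℕ) (k : Fin (m + 1) → ℤ) (θ : Fin (m + 1) → ℝ) (i : Fin (m + 1))
    (t : ℝ) (ht : Wfn m k θ t ≠ 0) : ContDiffAt ℝ 3 (psi m k θ i) t :=
  contDiffAt_const.mul (PsiF_contDiffAt m k θ i t ht)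

theorem Wfn_eventually_ne (m : ℕ) (k : Fin (m + 1) → ℤ) (θ : Fin (m + 1) → ℝ)
    (t : ℝ) (ht : Wfn m k θ t ≠ 0) : ∀ᶠ s in nhds t, Wfn m k θ s ≠ 0 :=
  (Wfn_contDiff m k θ).continuous.continuousAt.eventually_ne ht

/-- Crum's theorem. -/
theorem psi_ode (m : ℕ) (k : Fin (m + 1) → ℤ) (θ : Fin (m + 1) → ℝ)
    (i : Fin (m + 1)) (t : ℝ) (ht : Wfn m k θ t ≠ 0) :
    deriv (deriv (psi m k θ i)) t + (k i : ℝ) ^ 2 * psi m k θ i t +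
      2 * deriv (deriv fun t => Real.log (Wfn m k θ t)) t * psi m k θ i t = 0 := by
  have hev := Wfn_eventually_ne m k θ t ht
  have hd0 : ∀ s, Wfn m k θ s ≠ 0 → ∀ i, HasDerivAt (psi m k θ i) (deriv (psi m k θ i) s) s :=
    fun s hs i => ((psi_contDiffAt m k θ i s hs).differentiableAt (by norm_num)).hasDerivAt
  have hd1 : ∀ s, Wfn m k θ s ≠ 0 → ∀ i,
      HasDerivAt (deriv (psi m k θ i)) (deriv (deriv (psi m k θ i)) s) s := by
    intro s hs i
    have h1 : ContDiffAt ℝ 2 (fderiv ℝ (psi m k θ i)) s :=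
      (psi_contDiffAt m k θ i s hs).fderiv_right (by norm_num)
    have h2 : DifferentiableAt ℝ (deriv (psi m k θ i)) s :=
      (h1.differentiableAt (by norm_num)).clm_apply (differentiableAt_const 1)
    exact h2.hasDerivAt
  -- the logarithmic derivative
  set q : ℝ → ℝ := fun s => ∑ i, psi m k θ i s * chiD m k θ (m + 1) i s with hq
  have hlog : (deriv fun t => Real.log (Wfn m k θ t)) =ᶠ[nhds t] q := by
    filter_upwards [hev] with s hs
    rw [((Wfn_hasDerivAt m k θ s hs).log hs).deriv, mul_div_cancel_left₀ _ hs]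
  have hq' : HasDerivAt q (∑ i, (deriv (psi m k θ i) t * chiD m k θ (m + 1) i t +
      psi m k θ i t * chiD m k θ (m + 2) i t)) t :=
    HasDerivAt.fun_sum fun i _ => (hd0 t ht i).mul (chiD_hasDerivAt m k θ _ i t)
  rw [hlog.deriv_eq, hq'.deriv]
  -- first derivative of the system
  have s1 : ∀ s, Wfn m k θ s ≠ 0 → ∀ j ≤ m, ∑ i, deriv (psi m k θ i) s * chiD m k θ j i s =
      - ∑ i, psi m k θ i s * chiD m k θ (j + 1) i s := by
    intro s hs j hj
    have h1 : HasDerivAt (fun s => ∑ i, psi m k θ i s * chiD m k θ j i s)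
        (∑ i, (deriv (psi m k θ i) s * chiD m k θ j i s +
          psi m k θ i s * chiD m k θ (j + 1) i s)) s :=
      HasDerivAt.fun_sum fun i _ => (hd0 s hs i).mul (chiD_hasDerivAt m k θ _ i s)
    have h2 : (fun s => ∑ i, psi m k θ i s * chiD m k θ j i s) =ᶠ[nhds s]
        fun _ => if j = m then 1 else 0 := by
      filter_upwards [Wfn_eventually_ne m k θ s hs] with u hu
      exact psi_system m k θ u hu j hj
    have h3 := h1.unique ((hasDerivAt_const s _).congr_of_eventuallyEq h2)
    rw [Finset.sum_add_distrib] at h3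
    linarith
  -- second derivative of the system
  have s2 : ∀ j ≤ m, ∑ i, deriv (deriv (psi m k θ i)) t * chiD m k θ j i t =
      - 2 * (∑ i, deriv (psi m k θ i) t * chiD m k θ (j + 1) i t) -
       ∑ i, psi m k θ i t * chiD m k θ (j + 2) i t := by
    intro j hj
    have h1 : HasDerivAt (fun s => ∑ i, deriv (psi m k θ i) s * chiD m k θ j i s)
        (∑ i, (deriv (deriv (psi m k θ i)) t * chiD m k θ j i t +
          deriv (psi m k θ i) t * chiD m k θ (j + 1) i t)) t :=
      HasDerivAt.fun_sum fun i _ => (hd1 t ht i).mul (chiD_hasDerivAt m k θ _ i t)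
    have h1' : HasDerivAt (fun s => - ∑ i, psi m k θ i s * chiD m k θ (j + 1) i s)
        (-(∑ i, (deriv (psi m k θ i) t * chiD m k θ (j + 1) i t +
          psi m k θ i t * chiD m k θ (j + 2) i t))) t :=
      (HasDerivAt.fun_sum fun i _ => (hd0 t ht i).mul (chiD_hasDerivAt m k θ _ i t)).neg
    have h2 : (fun s => ∑ i, deriv (psi m k θ i) s * chiD m k θ j i s) =ᶠ[nhds t]
        fun s => - ∑ i, psi m k θ i s * chiD m k θ (j + 1) i s := by
      filter_upwards [hev] with u hu
      exact s1 u hu j hj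
    have h3 := h1.unique (h1'.congr_of_eventuallyEq h2)
    rw [Finset.sum_add_distrib, Finset.sum_add_distrib] at h3
    linarith
  set Q := ∑ i, (deriv (psi m k θ i) t * chiD m k θ (m + 1) i t +
      psi m k θ i t * chiD m k θ (m + 2) i t) with hQ
  have key : (fun i => deriv (deriv (psi m k θ i)) t + (k i : ℝ) ^ 2 * psi m k θ i t +
      2 * Q * psi m k θ i t) = 0 := by
    apply system_unique m k θ t ht
    intro j hj
    have e : ∑ i, (deriv (deriv (psi m k θ i)) t + (k i : ℝ) ^ 2 * psi m k θ i t +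
        2 * Q * psi m k θ i t) * chiD m k θ j i t =
        ∑ i, deriv (deriv (psi m k θ i)) t * chiD m k θ j i t
        - ∑ i, psi m k θ i t * chiD m k θ (j + 2) i t
        + 2 * Q * ∑ i, psi m k θ i t * chiD m k θ j i t := by
      rw [Finset.mul_sum _ _ (2 * Q), ← Finset.sum_sub_distrib, ← Finset.sum_add_distrib]
      refine Finset.sum_congr rfl fun i _ => ?_
      rw [chiD_add_two]; ring
    rw [e, s2 j hj, psi_system m k θ t ht j hj]
    rcases eq_or_lt_of_le hj with rfl | hlt
    · rw [if_pos rfl, hQ, Finset.sum_add_distrib]; ring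
    · rw [if_neg hlt.ne, s1 t ht (j + 1) hlt]; ring
  exact congrFun key i

/-! ### The kernel `∑ c_i Ψ_i Ψ_i cos` is constant -/

theorem coeff_sum_univ {m : ℕ} {v : Fin (m + 1) → ℝ} (hv : Function.Injective v)
    {P : Polynomial ℝ} (hP : P.natDegree ≤ m) :
    P.coeff m = ∑ i, P.eval (v i) / ∏ j ∈ Finset.univ.erase i, (v i - v j) := by
  have := Lagrange.coeff_eq_sum (s := Finset.univ) (v := v) hv.injOn (P := P) (by
    rw [Finset.card_univ, Fintype.card_fin]
    exact (Polynomial.degree_le_of_natDegree_le hP).trans_lt (by exact_mod_cast Nat.lt_succ_self m))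
  simpa using this

theorem interp_deg {m : ℕ} {v : Fin (m + 1) → ℝ} (hv : Function.Injective v)
    (A : Fin (m + 1) → ℝ) (L : ℕ) (hL : L ≤ m)
    (h : ∀ l < L, ∑ i, A i * v i ^ l / ∏ j ∈ Finset.univ.erase i, (v i - v j) = 0) :
    ∃ P : Polynomial ℝ, P.natDegree ≤ m - L ∧ (∀ i, P.eval (v i) = A i) ∧
      P.coeff (m - L) = ∑ i, A i * v i ^ L / ∏ j ∈ Finset.univ.erase i, (v i - v j) := by
  let P := Lagrange.interpolate Finset.univ v A
  have hev : ∀ i, P.eval (v i) = A i := fun i =>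
    Lagrange.eval_interpolate_at_node A hv.injOn (Finset.mem_univ i)
  have hdeg : P.natDegree ≤ m := by
    have := Lagrange.degree_interpolate_lt (s := Finset.univ) (v := v) A hv.injOn
    rw [Finset.card_univ, Fintype.card_fin] at this
    by_cases hP : P = 0
    · simp [hP]
    · exact Nat.le_of_lt_succ ((Polynomial.natDegree_lt_iff_degree_lt hP).2 this)
  have hc : ∀ l ≤ m, P.natDegree ≤ m - l → P.coeff (m - l) =
      ∑ i, A i * v i ^ l / ∏ j ∈ Finset.univ.erase i, (v i - v j) := by
    intro l hl hd
    have h1 : (P * Polynomial.X ^ l).natDegree ≤ m := by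
      refine Polynomial.natDegree_mul_le.trans ?_
      rw [Polynomial.natDegree_X_pow]; omega
    have h2 := coeff_sum_univ hv h1
    rw [Polynomial.coeff_mul_X_pow', if_pos hl] at h2
    rw [h2]
    simp [hev]
  have hd : ∀ l ≤ L, P.natDegree ≤ m - l := by
    intro l
    induction l with
    | zero => intro _; simpa using hdeg
    | succ l ih =>
      intro hl
      have h1 := ih (by omega)
      have h2 := hc l (by omega) h1
      rw [h l (by omega)] at h2
      have h3 : P.natDegree ≠ m - l ∨ P = 0 := by
        by_contra! hcon
        rw [← hcon.1] at h2
        exact hcon.2 (Polynomial.leadingCoeff_eq_zero.1 h2)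
      rcases h3 with h3 | h3
      · omega
      · rw [h3]; simp
  exact ⟨P, hd L le_rfl, hev, hc L hL (hd L le_rfl)⟩

theorem kernel_alg {m : ℕ} (hm : 1 ≤ m) (k : Fin (m + 1) → ℝ) (hv : Function.Injective fun i => k i ^ 2)
    (hk0 : k 0 = 0) (hkne : ∀ i, i ≠ 0 → k i ≠ 0)
    (a b C S C' S' : Fin (m + 1) → ℝ) (hS : S 0 = 0)
    (h1 : ∀ l, 2 * l ≤ m → ∑ i, a i * ((-1) ^ l * ((k i ^ 2) ^ l * C i)) =
      if 2 * l = m then 1 else 0)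
    (h2 : ∀ l, 2 * l + 1 ≤ m → ∑ i, a i * ((-1) ^ (l + 1) * ((k i ^ 2) ^ l * (k i * S i))) =
      if 2 * l + 1 = m then 1 else 0)
    (h3 : ∀ l, 2 * l ≤ m → ∑ i, b i * ((-1) ^ l * ((k i ^ 2) ^ l * C' i)) =
      if 2 * l = m then 1 else 0)
    (h4 : ∀ l, 2 * l + 1 ≤ m → ∑ i, b i * ((-1) ^ (l + 1) * ((k i ^ 2) ^ l * (k i * S' i))) =
      if 2 * l + 1 = m then 1 else 0) :
    ∑ i, (∏ j ∈ Finset.univ.erase i, (k i ^ 2 - k j ^ 2)) * a i * b i *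
      (C i * C' i + S i * S' i) = 1 := by
  set w : Fin (m + 1) → ℝ := fun i => ∏ j ∈ Finset.univ.erase i, (k i ^ 2 - k j ^ 2) with hw
  have hwne : ∀ i, w i ≠ 0 := by
    intro i
    refine Finset.prod_ne_zero_iff.2 fun j hj => sub_ne_zero.2 fun h => ?_
    exact Finset.ne_of_mem_erase hj (hv h).symm
  -- the interpolation data
  have pA : ∀ (a C : Fin (m + 1) → ℝ), (∀ l, 2 * l ≤ m →
      ∑ i, a i * ((-1) ^ l * ((k i ^ 2) ^ l * C i)) = if 2 * l = m then 1 else 0) →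
      ∀ l, 2 * l ≤ m → ∑ i, (w i * a i * C i) * (k i ^ 2) ^ l / w i =
        if 2 * l = m then (-1) ^ l else 0 := by
    intro a C h l hl
    have e : ∑ i, (w i * a i * C i) * (k i ^ 2) ^ l / w i =
        (-1) ^ l * ∑ i, a i * ((-1) ^ l * ((k i ^ 2) ^ l * C i)) := by
      rw [Finset.mul_sum]
      refine Finset.sum_congr rfl fun i _ => ?_
      have := hwne i
      have hs : ((-1 : ℝ) ^ l) * (-1) ^ l = 1 := by rw [← mul_pow]; simp
      field_simp
      linear_combination (-(a i * C i * (k i ^ 2) ^ l)) * hs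
    rw [e, h l hl]; split_ifs <;> simp
  have pB : ∀ (a S : Fin (m + 1) → ℝ), (∀ l, 2 * l + 1 ≤ m →
      ∑ i, a i * ((-1) ^ (l + 1) * ((k i ^ 2) ^ l * (k i * S i))) =
        if 2 * l + 1 = m then 1 else 0) →
      ∀ l, 2 * l + 1 ≤ m → ∑ i, (w i * a i * (k i * S i)) * (k i ^ 2) ^ l / w i =
        if 2 * l + 1 = m then (-1) ^ (l + 1) else 0 := by
    intro a S h l hl
    have e : ∑ i, (w i * a i * (k i * S i)) * (k i ^ 2) ^ l / w i =
        (-1) ^ (l + 1) * ∑ i, a i * ((-1) ^ (l + 1) * ((k i ^ 2) ^ l * (k i * S i))) := by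
      rw [Finset.mul_sum]
      refine Finset.sum_congr rfl fun i _ => ?_
      have := hwne i
      have hs : ((-1 : ℝ) ^ (l + 1)) * (-1) ^ (l + 1) = 1 := by rw [← mul_pow]; simp
      rw [div_eq_iff this]
      linear_combination (-(w i * a i * (k i * S i) * (k i ^ 2) ^ l)) * hs
    rw [e, h l hl]; split_ifs <;> simp
  -- combining
  have comb : ∀ (A A' D D' : Polynomial ℝ), (∀ i, A.eval (k i ^ 2) = w i * a i * C i) →
      (∀ i, A'.eval (k i ^ 2) = w i * b i * C' i) →
      (∀ i, (Polynomial.X * D).eval (k i ^ 2) = w i * a i * (k i * S i)) →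
      (∀ i, (Polynomial.X * D').eval (k i ^ 2) = w i * b i * (k i * S' i)) →
      (A * A' + Polynomial.X * (D * D')).natDegree ≤ m →
      ∑ i, w i * a i * b i * (C i * C' i + S i * S' i) =
        (A * A' + Polynomial.X * (D * D')).coeff m := by
    intro A A' D D' e1 e2 e3 e4 hd
    rw [coeff_sum_univ hv hd]
    refine Finset.sum_congr rfl fun i _ => ?_
    have hi := hwne i
    change _ = _ / w i
    rw [eq_div_iff hi]
    simp only [Polynomial.eval_add, Polynomial.eval_mul, Polynomial.eval_X] at e3 e4 ⊢
    rw [e1, e2]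
    by_cases h0 : i = 0
    · subst h0; rw [hS, hk0]; ring
    · have hki := hkne i h0
      have f3 : k i * D.eval (k i ^ 2) = w i * a i * S i := by
        apply mul_left_cancel₀ hki; linear_combination e3 i
      have f4 : k i * D'.eval (k i ^ 2) = w i * b i * S' i := by
        apply mul_left_cancel₀ hki; linear_combination e4 i
      linear_combination (-(k i * D'.eval (k i ^ 2))) * f3 - (w i * a i * S i) * f4
  have div : ∀ (B : Polynomial ℝ) (a S : Fin (m + 1) → ℝ) (d : ℕ),
      (∀ i, B.eval (k i ^ 2) = w i * a i * (k i * S i)) → B.natDegree ≤ d →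
      ∃ D : Polynomial ℝ, B = Polynomial.X * D ∧ D.natDegree ≤ d - 1 := by
    intro B a S d hB hd
    have h0 := hB 0
    rw [hk0] at h0
    have : Polynomial.X ∣ B := by
      rw [Polynomial.X_dvd_iff, Polynomial.coeff_zero_eq_eval_zero]
      simpa using h0
    obtain ⟨D, rfl⟩ := this
    refine ⟨D, rfl, ?_⟩
    by_cases hD : D = 0
    · simp [hD]
    · rw [Polynomial.natDegree_X_mul hD] at hd; omega
  have qA := pA a C h1
  have qA' := pA b C' h3
  have qB := pB a S h2
  have qB' := pB b S' h4
  rcases Nat.even_or_odd' m with ⟨n, hn | hn⟩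
  · obtain ⟨A, dA, eA, cA⟩ := interp_deg hv (fun i => w i * a i * C i) n (by omega)
      (fun l hl => (qA l (by omega)).trans (if_neg (by omega)))
    obtain ⟨A', dA', eA', cA'⟩ := interp_deg hv (fun i => w i * b i * C' i) n (by omega)
      (fun l hl => (qA' l (by omega)).trans (if_neg (by omega)))
    obtain ⟨B, dB, eB, -⟩ := interp_deg hv (fun i => w i * a i * (k i * S i)) n (by omega)
      (fun l hl => (qB l (by omega)).trans (if_neg (by omega)))
    obtain ⟨B', dB', eB', -⟩ := interp_deg hv (fun i => w i * b i * (k i * S' i)) n (by omega)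
      (fun l hl => (qB' l (by omega)).trans (if_neg (by omega)))
    obtain ⟨D, rfl, dD⟩ := div B a S _ eB dB
    obtain ⟨D', rfl, dD'⟩ := div B' b S' _ eB' dB'
    have cA1 := cA.trans ((qA n (by omega)).trans (if_pos (by omega)))
    have cA1' := cA'.trans ((qA' n (by omega)).trans (if_pos (by omega)))
    have hmn : m - n = n := by omega
    rw [hmn] at dA dA' dD dD' cA1 cA1'
    have d1 : (A * A').natDegree ≤ m := Polynomial.natDegree_mul_le.trans (by omega)
    have hn0 : n ≠ 0 := by omega
    have d2 : (Polynomial.X * (D * D')).natDegree < m := by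
      refine lt_of_le_of_lt Polynomial.natDegree_mul_le ?_
      have := Polynomial.natDegree_mul_le (p := D) (q := D')
      rw [Polynomial.natDegree_X]; omega
    rw [comb A A' D D' eA eA' eB eB' (Polynomial.natDegree_add_le_of_degree_le d1 d2.le),
      Polynomial.coeff_add, Polynomial.coeff_eq_zero_of_natDegree_lt d2]
    have : m = n + n := by omega
    conv_lhs => rw [this]
    rw [Polynomial.coeff_mul_add_eq_of_natDegree_le dA dA', cA1, cA1', ← mul_pow]
    simp
  · obtain ⟨A, dA, eA, -⟩ := interp_deg hv (fun i => w i * a i * C i) (n + 1) (by omega)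
      (fun l hl => (qA l (by omega)).trans (if_neg (by omega)))
    obtain ⟨A', dA', eA', -⟩ := interp_deg hv (fun i => w i * b i * C' i) (n + 1) (by omega)
      (fun l hl => (qA' l (by omega)).trans (if_neg (by omega)))
    obtain ⟨B, dB, eB, cB⟩ := interp_deg hv (fun i => w i * a i * (k i * S i)) n (by omega)
      (fun l hl => (qB l (by omega)).trans (if_neg (by omega)))
    obtain ⟨B', dB', eB', cB'⟩ := interp_deg hv (fun i => w i * b i * (k i * S' i)) n (by omega)
      (fun l hl => (qB' l (by omega)).trans (if_neg (by omega)))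
    have cB1 := cB.trans ((qB n (by omega)).trans (if_pos (by omega)))
    have cB1' := cB'.trans ((qB' n (by omega)).trans (if_pos (by omega)))
    obtain ⟨D, rfl, dD⟩ := div B a S _ eB dB
    obtain ⟨D', rfl, dD'⟩ := div B' b S' _ eB' dB'
    have hmn : m - n = n + 1 := by omega
    have hmn' : m - (n + 1) = n := by omega
    rw [hmn, Polynomial.coeff_X_mul] at cB1 cB1'
    rw [hmn'] at dA dA'
    rw [hmn, Nat.add_sub_cancel] at dD dD'
    have d1 : (A * A').natDegree < m :=
      lt_of_le_of_lt Polynomial.natDegree_mul_le (by omega)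
    have d2 : (Polynomial.X * (D * D')).natDegree ≤ m := by
      refine Polynomial.natDegree_mul_le.trans ?_
      have := Polynomial.natDegree_mul_le (p := D) (q := D')
      rw [Polynomial.natDegree_X]; omega
    rw [comb A A' D D' eA eA' eB eB' (Polynomial.natDegree_add_le_of_degree_le d1.le d2),
      Polynomial.coeff_add, Polynomial.coeff_eq_zero_of_natDegree_lt d1]
    have : m = (n + n) + 1 := by omega
    conv_lhs => rw [this]
    rw [Polynomial.coeff_X_mul, Polynomial.coeff_mul_add_eq_of_natDegree_le dD dD', cB1, cB1',
      ← mul_pow]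
    simp

theorem kernel_eq_one (m : ℕ) (hm : 1 ≤ m) (k : Fin (m + 1) → ℤ) (hk0 : k 0 = 0) (hk : StrictMono k)
    (θ : Fin (m + 1) → ℝ) (hθ0 : θ 0 = 0) (t s : ℝ) (ht : Wfn m k θ t ≠ 0)
    (hs : Wfn m k θ s ≠ 0) :
    ∑ i, cF m k i * psi m k θ i t * psi m k θ i s *
      (Polynomial.Chebyshev.T ℝ (k i)).eval (Real.cos (t - s)) = 1 := by
  have hnn : ∀ i, 0 ≤ k i := fun i => hk0 ▸ hk.monotone (Fin.zero_le i)
  have hinj : Function.Injective fun i => ((k i : ℝ)) ^ 2 := by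
    intro i j h
    have h' : (k i : ℝ) ^ 2 = (k j : ℝ) ^ 2 := h
    have h2 : (k i : ℝ) = k j :=
      (sq_eq_sq₀ (by exact_mod_cast hnn i) (by exact_mod_cast hnn j)).1 h'
    exact hk.injective (by exact_mod_cast h2)
  have := kernel_alg hm (fun i => (k i : ℝ)) hinj (by simp [hk0])
    (fun i hi => by
      have : k i ≠ k 0 := fun h => hi (hk.injective h)
      rw [hk0] at this; exact_mod_cast this)
    (fun i => psi m k θ i t) (fun i => psi m k θ i s)
    (fun i => Real.cos (k i * t + θ i)) (fun i => Real.sin (k i * t + θ i))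
    (fun i => Real.cos (k i * s + θ i)) (fun i => Real.sin (k i * s + θ i))
    (by simp [hk0, hθ0])
    (fun l hl => by simpa only [chiD_even] using psi_system m k θ t ht (2 * l) hl)
    (fun l hl => by simpa only [chiD_odd] using psi_system m k θ t ht (2 * l + 1) hl)
    (fun l hl => by simpa only [chiD_even] using psi_system m k θ s hs (2 * l) hl)
    (fun l hl => by simpa only [chiD_odd] using psi_system m k θ s hs (2 * l + 1) hl)
  rw [← this]
  refine Finset.sum_congr rfl fun i _ => ?_
  rw [Polynomial.Chebyshev.T_real_cos, ← Real.cos_sub]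
  unfold cF
  congr 2
  ring

/-! ### The radial-angular building blocks -/

noncomputable def FF (T : Polynomial ℝ) (N : ℕ) (ρ ϕ r t : ℝ) : ℝ :=
  ∑ ν ∈ Finset.range (N + 1), (-(r * ρ)⁻¹) ^ ν *
    (Polynomial.derivative^[ν] T).eval (Real.cos (t - ϕ)) * Real.exp (r * ρ * Real.cos (t - ϕ))

theorem FF_tele (a : ℕ → ℝ) (N : ℕ) :
    ∑ ν ∈ Finset.range (N + 1), (a (ν + 1) - a ν) = a (N + 1) - a 0 :=
  Finset.sum_range_sub a (N + 1)

theorem FF_hasDerivAt_t (T : Polynomial ℝ) (N : ℕ) (hT : Polynomial.derivative^[N + 1] T = 0)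
    (ρ ϕ r t : ℝ) (hz : r * ρ ≠ 0) :
    HasDerivAt (fun t => FF T N ρ ϕ r t)
      (-(r * ρ) * Real.sin (t - ϕ) * T.eval (Real.cos (t - ϕ)) *
        Real.exp (r * ρ * Real.cos (t - ϕ))) t := by
  have hc : HasDerivAt (fun t => Real.cos (t - ϕ)) (-Real.sin (t - ϕ)) t := by
    simpa using ((hasDerivAt_id t).sub_const ϕ).cos
  have he : HasDerivAt (fun t => Real.exp (r * ρ * Real.cos (t - ϕ))) _ t :=
    (hc.const_mul (r * ρ)).exp
  have hp : ∀ ν : ℕ, HasDerivAt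
      (fun t => (Polynomial.derivative^[ν] T).eval (Real.cos (t - ϕ)))
      ((Polynomial.derivative (Polynomial.derivative^[ν] T)).eval (Real.cos (t - ϕ)) *
        -Real.sin (t - ϕ)) t := fun ν =>
    HasDerivAt.comp (h₂ := fun x => (Polynomial.derivative^[ν] T).eval x) t
      ((Polynomial.derivative^[ν] T).hasDerivAt (Real.cos (t - ϕ))) hc
  have hs : HasDerivAt (fun t => FF T N ρ ϕ r t) _ t :=
    HasDerivAt.fun_sum (u := Finset.range (N + 1)) fun ν _ =>
      ((hp ν).const_mul ((-(r * ρ)⁻¹) ^ ν)).fun_mul he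
  refine hs.congr_deriv ?_
  have key := FF_tele (fun ν => (-(r * ρ)⁻¹) ^ ν *
    (Polynomial.derivative^[ν] T).eval (Real.cos (t - ϕ))) N
  simp only [hT, Polynomial.eval_zero, mul_zero, pow_zero, one_mul, Function.iterate_zero, id,
    zero_sub] at key
  have : ∀ ν : ℕ, (-(r * ρ)⁻¹) ^ ν *
        ((Polynomial.derivative (Polynomial.derivative^[ν] T)).eval (Real.cos (t - ϕ)) *
          -Real.sin (t - ϕ)) * Real.exp (r * ρ * Real.cos (t - ϕ)) +
      (-(r * ρ)⁻¹) ^ ν * (Polynomial.derivative^[ν] T).eval (Real.cos (t - ϕ)) *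
        (Real.exp (r * ρ * Real.cos (t - ϕ)) * (r * ρ * -Real.sin (t - ϕ))) =
      (r * ρ * Real.sin (t - ϕ) * Real.exp (r * ρ * Real.cos (t - ϕ))) *
       ((-(r * ρ)⁻¹) ^ (ν + 1) * (Polynomial.derivative^[ν + 1] T).eval (Real.cos (t - ϕ)) -
       (-(r * ρ)⁻¹) ^ ν * (Polynomial.derivative^[ν] T).eval (Real.cos (t - ϕ))) := by
    intro ν
    rw [Function.iterate_succ_apply', pow_succ]
    have hzz : (r * ρ) * (r * ρ)⁻¹ = 1 := mul_inv_cancel₀ hz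
    generalize (r * ρ)⁻¹ = y at *
    generalize r * ρ = z at *
    linear_combination (Real.sin (t - ϕ) * Real.exp (z * Real.cos (t - ϕ)) * (-y) ^ ν *
      (Polynomial.derivative (Polynomial.derivative^[ν] T)).eval (Real.cos (t - ϕ))) * hzz
  rw [Finset.sum_congr rfl fun ν _ => this ν, ← Finset.mul_sum, key]
  ring

theorem FF_hasDerivAt_tt (T : Polynomial ℝ) (ρ ϕ r t : ℝ) :
    HasDerivAt (fun t => -(r * ρ) * Real.sin (t - ϕ) * T.eval (Real.cos (t - ϕ)) *
        Real.exp (r * ρ * Real.cos (t - ϕ)))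
      (-(r * ρ) * Real.exp (r * ρ * Real.cos (t - ϕ)) *
        (Real.cos (t - ϕ) * T.eval (Real.cos (t - ϕ)) -
          Real.sin (t - ϕ) ^ 2 * (Polynomial.derivative T).eval (Real.cos (t - ϕ)) -
          r * ρ * Real.sin (t - ϕ) ^ 2 * T.eval (Real.cos (t - ϕ)))) t := by
  have hc : HasDerivAt (fun t => Real.cos (t - ϕ)) (-Real.sin (t - ϕ)) t := by
    simpa using ((hasDerivAt_id t).sub_const ϕ).cos
  have hs : HasDerivAt (fun t => Real.sin (t - ϕ)) (Real.cos (t - ϕ)) t := by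
    simpa using ((hasDerivAt_id t).sub_const ϕ).sin
  have he : HasDerivAt (fun t => Real.exp (r * ρ * Real.cos (t - ϕ))) _ t :=
    (hc.const_mul (r * ρ)).exp
  have hp : HasDerivAt (fun t => T.eval (Real.cos (t - ϕ)))
      ((Polynomial.derivative T).eval (Real.cos (t - ϕ)) * -Real.sin (t - ϕ)) t :=
    HasDerivAt.comp (h₂ := fun x => T.eval x) t (T.hasDerivAt (Real.cos (t - ϕ))) hc
  refine (((hs.const_mul (-(r * ρ))).fun_mul hp).fun_mul he).congr_deriv ?_
  ring

theorem g_hasDerivAt (ρ u : ℝ) (hρ : ρ ≠ 0) (ν : ℕ) (r : ℝ) (hr : r ≠ 0) :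
    HasDerivAt (fun r => (-(r * ρ)⁻¹) ^ ν * Real.exp (r * ρ * u))
      ((-(ν / r) + ρ * u) * ((-(r * ρ)⁻¹) ^ ν * Real.exp (r * ρ * u))) r := by
  have h1 : HasDerivAt (fun r : ℝ => r * ρ) ρ r := by
    simpa using (hasDerivAt_id r).mul_const ρ
  have h2 : HasDerivAt (fun r : ℝ => -(r * ρ)⁻¹) (-(-ρ / (r * ρ) ^ 2)) r :=
    (h1.inv (mul_ne_zero hr hρ)).neg
  refine ((h2.fun_pow ν).fun_mul (h1.mul_const u).exp).congr_deriv ?_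
  cases ν with
  | zero => simp; ring
  | succ n =>
    simp only [Nat.add_sub_cancel, pow_succ]
    push_cast
    field_simp
    ring

noncomputable def FFr (T : Polynomial ℝ) (N : ℕ) (ρ ϕ r t : ℝ) : ℝ :=
  ∑ ν ∈ Finset.range (N + 1), (-(ν / r) + ρ * Real.cos (t - ϕ)) * ((-(r * ρ)⁻¹) ^ ν *
    Real.exp (r * ρ * Real.cos (t - ϕ))) * (Polynomial.derivative^[ν] T).eval (Real.cos (t - ϕ))

noncomputable def FFrr (T : Polynomial ℝ) (N : ℕ) (ρ ϕ r t : ℝ) : ℝ :=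
  ∑ ν ∈ Finset.range (N + 1), (ν / r ^ 2 + (-(ν / r) + ρ * Real.cos (t - ϕ)) ^ 2) *
    ((-(r * ρ)⁻¹) ^ ν *
    Real.exp (r * ρ * Real.cos (t - ϕ))) * (Polynomial.derivative^[ν] T).eval (Real.cos (t - ϕ))

theorem FF_hasDerivAt_r (T : Polynomial ℝ) (N : ℕ) (ρ ϕ r t : ℝ) (hr : r ≠ 0) (hρ : ρ ≠ 0) :
    HasDerivAt (fun r => FF T N ρ ϕ r t) (FFr T N ρ ϕ r t) r := by
  unfold FF FFr
  refine HasDerivAt.fun_sum fun ν _ => ?_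
  refine ((g_hasDerivAt ρ (Real.cos (t - ϕ)) hρ ν r hr).mul_const
    ((Polynomial.derivative^[ν] T).eval (Real.cos (t - ϕ)))).congr_of_eventuallyEq ?_
  exact Filter.Eventually.of_forall fun x => by ring

theorem FF_hasDerivAt_rr (T : Polynomial ℝ) (N : ℕ) (ρ ϕ r t : ℝ) (hr : r ≠ 0) (hρ : ρ ≠ 0) :
    HasDerivAt (fun r => FFr T N ρ ϕ r t) (FFrr T N ρ ϕ r t) r := by
  unfold FFr FFrr
  refine HasDerivAt.fun_sum fun ν _ => ?_
  have h0 : HasDerivAt (fun r : ℝ => (-((ν : ℝ) / r) + ρ * Real.cos (t - ϕ)))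
      (ν / r ^ 2) r := by
    refine ((((hasDerivAt_inv hr).const_mul (ν : ℝ)).fun_neg).add_const
      (ρ * Real.cos (t - ϕ))).congr_deriv ?_
    simp [div_eq_mul_inv]
  refine ((h0.fun_mul (g_hasDerivAt ρ (Real.cos (t - ϕ)) hρ ν r hr)).mul_const
    ((Polynomial.derivative^[ν] T).eval (Real.cos (t - ϕ)))).congr_deriv ?_
  ring

theorem FF_radial (n : ℤ) (N : ℕ)
    (hT : Polynomial.derivative^[N + 1] (Polynomial.Chebyshev.T ℝ n) = 0)
    (ρ ϕ r t : ℝ) (hr : r ≠ 0) (hρ : ρ ≠ 0) :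
    r ^ 2 * FFrr (Polynomial.Chebyshev.T ℝ n) N ρ ϕ r t +
      r * FFr (Polynomial.Chebyshev.T ℝ n) N ρ ϕ r t =
    ((n : ℝ) ^ 2 + (r * ρ) ^ 2) * FF (Polynomial.Chebyshev.T ℝ n) N ρ ϕ r t +
      Real.exp (r * ρ * Real.cos (t - ϕ)) *
      (-(r * ρ) ^ 2 * Real.sin (t - ϕ) ^ 2 *
          (Polynomial.Chebyshev.T ℝ n).eval (Real.cos (t - ϕ)) +
        (r * ρ) * Real.sin (t - ϕ) ^ 2 *
          (Polynomial.derivative (Polynomial.Chebyshev.T ℝ n)).eval (Real.cos (t - ϕ)) +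
        Real.cos (t - ϕ) * (r * ρ) *
          (Polynomial.Chebyshev.T ℝ n).eval (Real.cos (t - ϕ))) := by
  have hz : r * ρ ≠ 0 := mul_ne_zero hr hρ
  have hsin : Real.sin (t - ϕ) ^ 2 = 1 - Real.cos (t - ϕ) ^ 2 := by
    linear_combination Real.sin_sq_add_cos_sq (t - ϕ)
  have ode := fun ν : ℕ => Polynomial.Chebyshev.one_sub_X_sq_mul_iterate_derivative_T_eval
    (R := ℝ) n ν (Real.cos (t - ϕ))
  have hT2 : Polynomial.derivative^[N + 2] (Polynomial.Chebyshev.T ℝ n) = 0 := by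
    rw [Function.iterate_succ_apply', hT, Polynomial.derivative_zero]
  have hzz : (r * ρ) * (r * ρ)⁻¹ = 1 := mul_inv_cancel₀ hz
  set P : ℕ → ℝ := fun ν =>
    (Polynomial.derivative^[ν] (Polynomial.Chebyshev.T ℝ n)).eval (Real.cos (t - ϕ)) with hP
  have hP1 : P (N + 1) = 0 := by simp only [hP, hT, Polynomial.eval_zero]
  have hP2 : P (N + 2) = 0 := by simp only [hP, hT2, Polynomial.eval_zero]
  have ode' : ∀ ν : ℕ, (1 - Real.cos (t - ϕ) ^ 2) * P (ν + 2) =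
    (2 * ν + 1) * Real.cos (t - ϕ) * P (ν + 1) - ((n : ℝ) ^ 2 - (ν : ℝ) ^ 2) * P ν := ode
  have hP0 : (Polynomial.Chebyshev.T ℝ n).eval (Real.cos (t - ϕ)) = P 0 := rfl
  have hP01 : (Polynomial.derivative (Polynomial.Chebyshev.T ℝ n)).eval (Real.cos (t - ϕ)) = P 1 :=
    rfl
  rw [hP0, hP01, hsin]
  set u := Real.cos (t - ϕ) with hu
  have tele := FF_tele (fun ν => (r * ρ) ^ 2 * (1 - u ^ 2) * ((-(r * ρ)⁻¹) ^ ν * P ν +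
    (-(r * ρ)⁻¹) ^ (ν + 1) * P (ν + 1)) + u * (r * ρ) * (2 * ν - 1) * ((-(r * ρ)⁻¹) ^ ν * P ν)) N
  have main : r ^ 2 * FFrr (Polynomial.Chebyshev.T ℝ n) N ρ ϕ r t +
      r * FFr (Polynomial.Chebyshev.T ℝ n) N ρ ϕ r t -
      ((n : ℝ) ^ 2 + (r * ρ) ^ 2) * FF (Polynomial.Chebyshev.T ℝ n) N ρ ϕ r t =
      Real.exp (r * ρ * u) * ∑ ν ∈ Finset.range (N + 1),
      (((r * ρ) ^ 2 * (1 - u ^ 2) * ((-(r * ρ)⁻¹) ^ (ν + 1) * P (ν + 1) +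
    (-(r * ρ)⁻¹) ^ (ν + 1 + 1) * P (ν + 1 + 1)) + u * (r * ρ) * (2 * ((ν + 1 : ℕ) : ℝ) - 1) *
      ((-(r * ρ)⁻¹) ^ (ν + 1) * P (ν + 1))) -
    ((r * ρ) ^ 2 * (1 - u ^ 2) * ((-(r * ρ)⁻¹) ^ ν * P ν +
    (-(r * ρ)⁻¹) ^ (ν + 1) * P (ν + 1)) + u * (r * ρ) * (2 * ν - 1) *
      ((-(r * ρ)⁻¹) ^ ν * P ν))) := by
    unfold FFrr FFr FF
    rw [Finset.mul_sum, Finset.mul_sum, Finset.mul_sum, Finset.mul_sum, ← Finset.sum_add_distrib,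
      ← Finset.sum_sub_distrib]
    refine Finset.sum_congr rfl fun ν _ => ?_
    change r ^ 2 * ((ν / r ^ 2 + (-(ν / r) + ρ * u) ^ 2) *
      ((-(r * ρ)⁻¹) ^ ν * Real.exp (r * ρ * u)) * P ν) +
      r * ((-(ν / r) + ρ * u) * ((-(r * ρ)⁻¹) ^ ν * Real.exp (r * ρ * u)) * P ν) -
      ((n : ℝ) ^ 2 + (r * ρ) ^ 2) * ((-(r * ρ)⁻¹) ^ ν * P ν * Real.exp (r * ρ * u)) = _
    have e1 : r ^ 2 * (ν / r ^ 2 + (-(ν / r) + ρ * u) ^ 2) + r * (-(ν / r) + ρ * u) =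
        (r * ρ * u - ν) ^ 2 + r * ρ * u := by
      field_simp
      ring
    have o := ode' ν
    have e2 : r ^ 2 * ((ν / r ^ 2 + (-(ν / r) + ρ * u) ^ 2) *
      ((-(r * ρ)⁻¹) ^ ν * Real.exp (r * ρ * u)) * P ν) +
      r * ((-(ν / r) + ρ * u) * ((-(r * ρ)⁻¹) ^ ν * Real.exp (r * ρ * u)) * P ν) =
      ((r * ρ * u - ν) ^ 2 + r * ρ * u) * ((-(r * ρ)⁻¹) ^ ν * Real.exp (r * ρ * u)) * P ν := by
      rw [← e1]; ring
    rw [e2]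
    have e3 : (r * ρ) ^ 2 * (-(r * ρ)⁻¹) ^ (ν + 1 + 1) = (-(r * ρ)⁻¹) ^ ν := by
      rw [pow_succ, pow_succ]
      linear_combination ((-(r * ρ)⁻¹) ^ ν * (r * ρ * (r * ρ)⁻¹ + 1)) * hzz
    have e4 : (r * ρ) * (-(r * ρ)⁻¹) ^ (ν + 1) = -(-(r * ρ)⁻¹) ^ ν := by
      rw [pow_succ]
      linear_combination (-(-(r * ρ)⁻¹) ^ ν) * hzz
    push_cast
    generalize (-(r * ρ)⁻¹) ^ (ν + 1 + 1) = y2 at *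
    generalize (-(r * ρ)⁻¹) ^ (ν + 1) = y1 at *
    generalize (-(r * ρ)⁻¹) ^ ν = y0 at *
    generalize r * ρ = z at *
    generalize Real.exp (z * u) = E at *
    change (1 - u ^ 2) * P (ν + 1 + 1) = _ at o
    linear_combination (-E * (1 - u ^ 2) * P (ν + 1 + 1)) * e3 -
      (E * u * (2 * ν + 1) * P (ν + 1)) * e4 - E * y0 * o
  rw [tele] at main
  have hP2' : P (N + 1 + 1) = 0 := hP2
  rw [hP1, hP2'] at main
  simp only [zero_add, pow_zero, pow_one, Nat.cast_zero, mul_zero, zero_sub, one_mul] at main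
  linear_combination main + Real.exp (r * ρ * u) * (r * ρ) * (1 - u ^ 2) * P 1 * hzz

theorem FF_contDiffAt (T : Polynomial ℝ) (N : ℕ) (ρ ϕ r t : ℝ) (hr : r ≠ 0) (hρ : ρ ≠ 0) :
    ContDiffAt ℝ 2 (fun p : ℝ × ℝ => FF T N ρ ϕ p.1 p.2) (r, t) := by
  unfold FF
  refine ContDiffAt.sum fun ν _ => ?_
  have hc : ContDiff ℝ 2 fun p : ℝ × ℝ => Real.cos (p.2 - ϕ) :=
    Real.contDiff_cos.comp (contDiff_snd.sub contDiff_const)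
  have h1 : ContDiffAt ℝ 2 (fun p : ℝ × ℝ => (p.1 * ρ)⁻¹) (r, t) :=
    ((contDiff_fst.mul contDiff_const).contDiffAt).inv (mul_ne_zero hr hρ)
  have h2 : ContDiff ℝ 2 fun p : ℝ × ℝ =>
      (Polynomial.derivative^[ν] T).eval (Real.cos (p.2 - ϕ)) :=
    by
    have := ((Polynomial.derivative^[ν] T).contDiff_aeval (𝕜 := ℝ) 2).comp hc
    simp only [Polynomial.coe_aeval_eq_eval] at this
    exact this
  have h3 : ContDiff ℝ 2 fun p : ℝ × ℝ => Real.exp (p.1 * ρ * Real.cos (p.2 - ϕ)) :=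
    Real.contDiff_exp.comp ((contDiff_fst.mul contDiff_const).mul hc)
  exact ((h1.neg.pow ν).mul h2.contDiffAt).mul h3.contDiffAt

/-! ### Assembly -/

theorem main_aux (m : ℕ) (hm : 1 ≤ m)
    (k : Fin (m + 1) → ℤ) (hk0 : k 0 = 0) (hk : StrictMono k)
    (θ : Fin (m + 1) → ℝ) (hθ0 : θ 0 = 0) (N : ℕ)
    (hN : ∀ i, Polynomial.derivative^[N + 1] (Polynomial.Chebyshev.T ℝ (k i)) = 0)
    (r φ ρ ϕ : ℝ) (hr : 0 < r) (hρ : 0 < ρ)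
    (hφ : Wfn m k θ φ ≠ 0) (hϕ : Wfn m k θ ϕ ≠ 0) (G : ℝ × ℝ → ℝ)
    (hG : G = fun p => ∑ i, cF m k i * psi m k θ i ϕ * psi m k θ i p.2 *
      FF (Polynomial.Chebyshev.T ℝ (k i)) N ρ ϕ p.1 p.2) :
    ContDiffAt ℝ 2 G (r, φ) ∧
    deriv (deriv fun s => G (s, φ)) r + deriv (fun s => G (s, φ)) r / r +
      deriv (deriv fun s => G (r, s)) φ / r ^ 2 =
      (ρ ^ 2 - 2 / r ^ 2 * deriv (deriv fun t => Real.log (Wfn m k θ t)) φ) * G (r, φ) := by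
  have hr0 : r ≠ 0 := hr.ne'
  have hρ0 : ρ ≠ 0 := hρ.ne'
  have hz : r * ρ ≠ 0 := mul_ne_zero hr0 hρ0
  refine ⟨?_, ?_⟩
  · rw [hG]
    refine ContDiffAt.sum fun i _ => ?_
    have h1 : ContDiffAt ℝ 2 (fun p : ℝ × ℝ => psi m k θ i p.2) (r, φ) :=
      ContDiffAt.comp (g := psi m k θ i) (r, φ)
        ((psi_contDiffAt m k θ i φ hφ).of_le (by norm_num)) contDiffAt_snd
    exact (contDiffAt_const.mul h1).mul (FF_contDiffAt _ N ρ ϕ r φ hr0 hρ0)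
  -- abbreviations
  have psi1 : ∀ i t, Wfn m k θ t ≠ 0 →
      HasDerivAt (psi m k θ i) (deriv (psi m k θ i) t) t := fun i t ht =>
    ((psi_contDiffAt m k θ i t ht).differentiableAt (by norm_num)).hasDerivAt
  have psi2 : ∀ i t, Wfn m k θ t ≠ 0 →
      HasDerivAt (deriv (psi m k θ i)) (deriv (deriv (psi m k θ i)) t) t := fun i t ht => by
    have h1 : ContDiffAt ℝ 2 (fderiv ℝ (psi m k θ i)) t :=
      (psi_contDiffAt m k θ i t ht).fderiv_right (by norm_num)
    have h2 : DifferentiableAt ℝ (deriv (psi m k θ i)) t :=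
      (h1.differentiableAt (by norm_num)).clm_apply (differentiableAt_const 1)
    exact h2.hasDerivAt
  have d1 : ∀ s, s ≠ 0 → HasDerivAt (fun s => G (s, φ)) (∑ i, cF m k i * psi m k θ i ϕ *
      psi m k θ i φ * FFr (Polynomial.Chebyshev.T ℝ (k i)) N ρ ϕ s φ) s := by
    intro s hs
    simp only [hG]
    exact HasDerivAt.fun_sum fun i _ => (FF_hasDerivAt_r _ N ρ ϕ s φ hs hρ0).const_mul _
  have d2 : HasDerivAt (deriv fun s => G (s, φ)) (∑ i, cF m k i * psi m k θ i ϕ *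
      psi m k θ i φ * FFrr (Polynomial.Chebyshev.T ℝ (k i)) N ρ ϕ r φ) r := by
    have : HasDerivAt (fun s => ∑ i, cF m k i * psi m k θ i ϕ *
      psi m k θ i φ * FFr (Polynomial.Chebyshev.T ℝ (k i)) N ρ ϕ s φ) _ r :=
      HasDerivAt.fun_sum fun i _ => (FF_hasDerivAt_rr _ N ρ ϕ r φ hr0 hρ0).const_mul _
    refine this.congr_of_eventuallyEq ?_
    filter_upwards [eventually_ne_nhds hr0] with s hs
    exact (d1 s hs).deriv
  have d3 : ∀ s, Wfn m k θ s ≠ 0 → HasDerivAt (fun s => G (r, s))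
      (∑ i, (cF m k i * psi m k θ i ϕ * deriv (psi m k θ i) s *
        FF (Polynomial.Chebyshev.T ℝ (k i)) N ρ ϕ r s + cF m k i * psi m k θ i ϕ *
        psi m k θ i s * (-(r * ρ) * Real.sin (s - ϕ) *
          (Polynomial.Chebyshev.T ℝ (k i)).eval (Real.cos (s - ϕ)) *
        Real.exp (r * ρ * Real.cos (s - ϕ))))) s := by
    intro s hs
    simp only [hG]
    exact HasDerivAt.fun_sum fun i _ => ((psi1 i s hs).const_mul _).fun_mul
      (FF_hasDerivAt_t _ N (hN i) ρ ϕ r s hz)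
  have d4 : HasDerivAt (deriv fun s => G (r, s))
      (∑ i, ((cF m k i * psi m k θ i ϕ * deriv (deriv (psi m k θ i)) φ *
        FF (Polynomial.Chebyshev.T ℝ (k i)) N ρ ϕ r φ + cF m k i * psi m k θ i ϕ *
        deriv (psi m k θ i) φ * (-(r * ρ) * Real.sin (φ - ϕ) *
          (Polynomial.Chebyshev.T ℝ (k i)).eval (Real.cos (φ - ϕ)) *
        Real.exp (r * ρ * Real.cos (φ - ϕ)))) +
      (cF m k i * psi m k θ i ϕ * deriv (psi m k θ i) φ * (-(r * ρ) * Real.sin (φ - ϕ) *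
          (Polynomial.Chebyshev.T ℝ (k i)).eval (Real.cos (φ - ϕ)) *
        Real.exp (r * ρ * Real.cos (φ - ϕ))) +
      cF m k i * psi m k θ i ϕ * psi m k θ i φ *
      (-(r * ρ) * Real.exp (r * ρ * Real.cos (φ - ϕ)) *
        (Real.cos (φ - ϕ) * (Polynomial.Chebyshev.T ℝ (k i)).eval (Real.cos (φ - ϕ)) -
          Real.sin (φ - ϕ) ^ 2 *
            (Polynomial.derivative (Polynomial.Chebyshev.T ℝ (k i))).eval (Real.cos (φ - ϕ)) -
          r * ρ * Real.sin (φ - ϕ) ^ 2 *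
            (Polynomial.Chebyshev.T ℝ (k i)).eval (Real.cos (φ - ϕ))))))) φ := by
    have : HasDerivAt (fun s => ∑ i, (cF m k i * psi m k θ i ϕ * deriv (psi m k θ i) s *
        FF (Polynomial.Chebyshev.T ℝ (k i)) N ρ ϕ r s + cF m k i * psi m k θ i ϕ *
        psi m k θ i s * (-(r * ρ) * Real.sin (s - ϕ) *
          (Polynomial.Chebyshev.T ℝ (k i)).eval (Real.cos (s - ϕ)) *
        Real.exp (r * ρ * Real.cos (s - ϕ))))) _ φ :=
      HasDerivAt.fun_sum fun i _ => (((psi2 i φ hφ).const_mul _).fun_mul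
        (FF_hasDerivAt_t _ N (hN i) ρ ϕ r φ hz)).fun_add
        (((psi1 i φ hφ).const_mul _).fun_mul (FF_hasDerivAt_tt _ ρ ϕ r φ))
    refine this.congr_of_eventuallyEq ?_
    filter_upwards [Wfn_eventually_ne m k θ φ hφ] with s hs
    exact (d3 s hs).deriv
  have ker : ∑ i, (cF m k i * psi m k θ i ϕ * deriv (psi m k θ i) φ *
      (Polynomial.Chebyshev.T ℝ (k i)).eval (Real.cos (φ - ϕ)) +
      cF m k i * psi m k θ i ϕ * psi m k θ i φ *
      ((Polynomial.derivative (Polynomial.Chebyshev.T ℝ (k i))).eval (Real.cos (φ - ϕ)) *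
        -Real.sin (φ - ϕ))) = 0 := by
    have hc : HasDerivAt (fun t => Real.cos (t - ϕ)) (-Real.sin (φ - ϕ)) φ := by
      simpa using ((hasDerivAt_id φ).sub_const ϕ).cos
    have hK : HasDerivAt (fun t => ∑ i, cF m k i * psi m k θ i ϕ * psi m k θ i t *
        (Polynomial.Chebyshev.T ℝ (k i)).eval (Real.cos (t - ϕ))) _ φ :=
      HasDerivAt.fun_sum fun i _ => ((psi1 i φ hφ).const_mul _).fun_mul
        (HasDerivAt.comp (h₂ := fun x => (Polynomial.Chebyshev.T ℝ (k i)).eval x) φ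
          ((Polynomial.Chebyshev.T ℝ (k i)).hasDerivAt (Real.cos (φ - ϕ))) hc)
    have hK' : HasDerivAt (fun t => ∑ i, cF m k i * psi m k θ i ϕ * psi m k θ i t *
        (Polynomial.Chebyshev.T ℝ (k i)).eval (Real.cos (t - ϕ))) 0 φ := by
      refine (hasDerivAt_const φ (1 : ℝ)).congr_of_eventuallyEq ?_
      filter_upwards [Wfn_eventually_ne m k θ φ hφ] with s hs
      rw [← kernel_eq_one m hm k hk0 hk θ hθ0 s ϕ hs hϕ]
      exact Finset.sum_congr rfl fun i _ => by ring
    exact hK.unique hK'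
  rw [d2.deriv, (d1 r hr0).deriv, d4.deriv]
  set L := deriv (deriv fun t => Real.log (Wfn m k θ t)) φ with hL
  have hmul : ∀ A B D E : ℝ, r ^ 2 * A + r * B + D = E * r ^ 2 →
      A + B / r + D / r ^ 2 = E := by
    intro A B D E h
    field_simp
    linarith
  apply hmul
  have hco : (ρ ^ 2 - 2 / r ^ 2 * L) * G (r, φ) * r ^ 2 = ((r * ρ) ^ 2 - 2 * L) * G (r, φ) := by
    field_simp
  rw [hco, ← sub_eq_zero]
  rw [hG]
  simp only [Finset.mul_sum]
  rw [← Finset.sum_add_distrib, ← Finset.sum_add_distrib, ← Finset.sum_sub_distrib]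
  rw [← mul_zero (-2 * (r * ρ) * Real.exp (r * ρ * Real.cos (φ - ϕ)) * Real.sin (φ - ϕ)), ← ker,
    Finset.mul_sum]
  refine Finset.sum_congr rfl fun i _ => ?_
  have o := psi_ode m k θ i φ hφ
  rw [← hL] at o
  have rad := FF_radial (k i) N (hN i) ρ ϕ r φ hr0 hρ0
  linear_combination (cF m k i * psi m k θ i ϕ * psi m k θ i φ) * rad +
    (cF m k i * psi m k θ i ϕ * FF (Polynomial.Chebyshev.T ℝ (k i)) N ρ ϕ r φ) * o

theorem iter_deriv_T (m : ℕ) (k : Fin (m + 1) → ℤ) (hk0 : k 0 = 0) (hk : StrictMono k)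
    (i : Fin (m + 1)) :
    Polynomial.derivative^[(k (Fin.last m)).toNat + 1] (Polynomial.Chebyshev.T ℝ (k i)) = 0 := by
  apply Polynomial.iterate_derivative_eq_zero
  rw [Polynomial.Chebyshev.natDegree_T]
  have h1 : 0 ≤ k i := hk0 ▸ hk.monotone (Fin.zero_le i)
  have h2 : k i ≤ k (Fin.last m) := hk.monotone (Fin.le_last i)
  omega

theorem sum_U (m : ℕ) (k : Fin (m + 1) → ℤ) (θ : Fin (m + 1) → ℝ) (N : ℕ) (r φ ρ ϕ : ℝ) :
    (∑ ν ∈ Finset.range (N + 1), (1 / 2 ^ ν : ℝ) * Ucoef m k θ ν r φ ρ ϕ) *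
          Real.exp ((r * Real.cos φ) * (ρ * Real.cos ϕ) +
            (r * Real.sin φ) * (ρ * Real.sin ϕ)) =
    ∑ i, cF m k i * psi m k θ i ϕ * psi m k θ i φ *
      FF (Polynomial.Chebyshev.T ℝ (k i)) N ρ ϕ r φ := by
  have he : (r * Real.cos φ) * (ρ * Real.cos ϕ) + (r * Real.sin φ) * (ρ * Real.sin ϕ) =
      r * ρ * Real.cos (φ - ϕ) := by rw [Real.cos_sub]; ring
  rw [he]
  unfold FF Ucoef
  simp only [Finset.mul_sum, Finset.sum_mul]
  rw [Finset.sum_comm]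
  refine Finset.sum_congr rfl fun i _ => Finset.sum_congr rfl fun ν _ => ?_
  have h1 : (1 / 2 ^ ν : ℝ) * ((-2) ^ ν / (r * ρ) ^ ν) = (-(r * ρ)⁻¹) ^ ν := by
    rw [← div_pow, ← one_div_pow, ← mul_pow]
    congr 1
    rw [div_eq_mul_inv (-2)]
    ring
  have h2 : psi m k θ i ϕ * psi m k θ i φ = PsiF m k θ i φ * PsiF m k θ i ϕ := by
    unfold psi
    have hs : ((-1 : ℝ) ^ ((i : ℕ) + m)) * (-1) ^ ((i : ℕ) + m) = 1 := by rw [← mul_pow]; simp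
    linear_combination (PsiF m k θ i φ * PsiF m k θ i ϕ) * hs
  rw [← h1]
  linear_combination (-(cF m k i * ((1 / 2 ^ ν : ℝ) * ((-2) ^ ν / (r * ρ) ^ ν)) *
    (Polynomial.derivative^[ν] (Polynomial.Chebyshev.T ℝ (k i))).eval (Real.cos (φ - ϕ)) *
    Real.exp (r * ρ * Real.cos (φ - ϕ)))) * h2

/-- **Theorem 3 (Baker–Akhiezer function).** The function
`Ψ_BA(x, ξ) = (∑_{ν=0}^{k_m} 2^{−ν} U_ν(x, ξ)) e^{⟨x, ξ⟩}` satisfies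
`−Δ_x Ψ_BA + V_k(x) Ψ_BA = −|ξ|² Ψ_BA`. -/
theorem baker_akhiezer (m : ℕ) (hm : 1 ≤ m)
    (k : Fin (m + 1) → ℤ) (hk0 : k 0 = 0) (hk : StrictMono k)
    (θ : Fin (m + 1) → ℝ) (hθ0 : θ 0 = 0)
    (Ψ : ℝ × ℝ → ℝ × ℝ → ℝ) (V : ℝ × ℝ → ℝ)
    (hΨ : ∀ (r φ ρ ϕ : ℝ), 0 < r → 0 < ρ →
      Wfn m k θ φ ≠ 0 → Wfn m k θ ϕ ≠ 0 →
      Ψ (r * Real.cos φ, r * Real.sin φ) (ρ * Real.cos ϕ, ρ * Real.sin ϕ)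
        = (∑ ν ∈ Finset.range ((k (Fin.last m)).toNat + 1),
            (1 / 2 ^ ν : ℝ) * Ucoef m k θ ν r φ ρ ϕ) *
          Real.exp ((r * Real.cos φ) * (ρ * Real.cos ϕ) +
            (r * Real.sin φ) * (ρ * Real.sin ϕ)))
    (hV : ∀ (r φ : ℝ), 0 < r → Wfn m k θ φ ≠ 0 →
      V (r * Real.cos φ, r * Real.sin φ) = Vpot m k θ r φ) :
    ∀ (r φ ρ ϕ : ℝ), 0 < r → 0 < ρ → Wfn m k θ φ ≠ 0 → Wfn m k θ ϕ ≠ 0 →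
      -lap2 (fun y => Ψ y (ρ * Real.cos ϕ, ρ * Real.sin ϕ))
          (r * Real.cos φ, r * Real.sin φ) +
        V (r * Real.cos φ, r * Real.sin φ) *
          Ψ (r * Real.cos φ, r * Real.sin φ) (ρ * Real.cos ϕ, ρ * Real.sin ϕ)
      = -((ρ * Real.cos ϕ) ^ 2 + (ρ * Real.sin ϕ) ^ 2) *
          Ψ (r * Real.cos φ, r * Real.sin φ) (ρ * Real.cos ϕ, ρ * Real.sin ϕ) := by
  intro r φ ρ ϕ hr hρ hφ hϕ
  obtain ⟨hc, hl⟩ := main_aux m hm k hk0 hk θ hθ0 _ (iter_deriv_T m k hk0 hk) r φ ρ ϕ hr hρ hφ hϕ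
    _ rfl
  have hval : Ψ (r * Real.cos φ, r * Real.sin φ) (ρ * Real.cos ϕ, ρ * Real.sin ϕ) =
      ∑ i, cF m k i * psi m k θ i ϕ * psi m k θ i φ *
        FF (Polynomial.Chebyshev.T ℝ (k i)) (k (Fin.last m)).toNat ρ ϕ r φ := by
    rw [hΨ r φ ρ ϕ hr hρ hφ hϕ, sum_U]
  have hlap := lap_polar _ (fun y => Ψ y (ρ * Real.cos ϕ, ρ * Real.sin ϕ)) r φ hr hc (by
    have e1 : ∀ᶠ p : ℝ × ℝ in nhds (r, φ), 0 < p.1 :=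
      continuousAt_fst.eventually (lt_mem_nhds hr)
    have e2 : ∀ᶠ p : ℝ × ℝ in nhds (r, φ), Wfn m k θ p.2 ≠ 0 :=
      continuousAt_snd.eventually (p := fun s => Wfn m k θ s ≠ 0) (Wfn_eventually_ne m k θ φ hφ)
    filter_upwards [e1, e2] with p h1 h2
    rw [hΨ p.1 p.2 ρ ϕ h1 hρ h2 hϕ, sum_U])
  rw [hlap, hl, hval, hV r φ hr hφ, Vpot]
  have hsc : (ρ * Real.cos ϕ) ^ 2 + (ρ * Real.sin ϕ) ^ 2 = ρ ^ 2 := by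
    linear_combination ρ ^ 2 * Real.sin_sq_add_cos_sq ϕ
  rw [hsc]
  ring
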